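/- arXiv:1701.07920 — 6 statements merged into one kernel-verified Lean document; each statement's English description precedes it below -/
import Mathlib

section
/- Suppose formulation (2) attains its minimum, i.e., there is a feasible solution (x*, y*, t*, z*, u*) of formulation (2) such that u* ≤ u for every feasible solution of formulation (2), and suppose in addition that u* ≤ M. Then formulation (3) attains its minimum and its optimal value equals u*: there exists a feasible solution of formulation (3) whose value of u equals u*, and every feasible solution of formulation (3) has value of u at least u*. -/
/-!
The constraints of formulation (3) linearize the product `v j = u * z j`: since `z` is binary, they
force this identity, so every feasible point of (3) is feasible for (2) with the same `u`.
Conversely, a feasible point of (2) with `u ≤ M` becomes feasible for (3) on setting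
`v j = u * z j`; the bound `u ≤ M` is what the big-`M` constraints on `v` require.
-/

open Finset

/-- Feasibility for formulation (2): `(x, y, t, z, u)` with binary `z`, `u ≥ 0`,
`Σ |t_i| = (n-1)u − u·Σ z_j`, residual equations, and `−M z_j ≤ x_j ≤ M z_j`. -/
def Feasible2 (n m : ℕ) (a : Fin n → Fin m → ℝ) (b : Fin n → ℝ) (M : ℝ)
    (x : Fin m → ℝ) (y : ℝ) (t : Fin n → ℝ) (z : Fin m → ℝ) (u : ℝ) : Prop :=
  (∀ j, z j = 0 ∨ z j = 1) ∧ 0 ≤ u ∧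
  (∑ i, |t i|) = ((n : ℝ) - 1) * u - u * ∑ j, z j ∧
  (∀ i, t i = (∑ j, a i j * x j) + y - b i) ∧
  (∀ j, -(M * z j) ≤ x j ∧ x j ≤ M * z j)

/-- Feasibility for formulation (3): additionally `v_j ≥ 0`,
`Σ |t_i| = (n-1)u − Σ v_j`, `v_j ≤ u`, and `u − M(1−z_j) ≤ v_j ≤ M z_j`. -/
def Feasible3 (n m : ℕ) (a : Fin n → Fin m → ℝ) (b : Fin n → ℝ) (M : ℝ)
    (x : Fin m → ℝ) (y : ℝ) (t : Fin n → ℝ) (z : Fin m → ℝ) (u : ℝ)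
    (v : Fin m → ℝ) : Prop :=
  (∀ j, z j = 0 ∨ z j = 1) ∧ 0 ≤ u ∧ (∀ j, 0 ≤ v j) ∧
  (∑ i, |t i|) = ((n : ℝ) - 1) * u - ∑ j, v j ∧
  (∀ i, t i = (∑ j, a i j * x j) + y - b i) ∧
  (∀ j, -(M * z j) ≤ x j ∧ x j ≤ M * z j) ∧
  (∀ j, v j ≤ u) ∧
  (∀ j, u - M * (1 - z j) ≤ v j) ∧ (∀ j, v j ≤ M * z j)

/-- If formulation (2) attains its minimum at `(x*, y*, t*, z*, u*)` with `u* ≤ M`,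
then formulation (3) attains its minimum and its optimal value equals `u*`. -/
theorem stmt0 (n m : ℕ) (hn : 1 ≤ n) (a : Fin n → Fin m → ℝ) (b : Fin n → ℝ)
    (M : ℝ) (hM : 0 < M)
    (xs : Fin m → ℝ) (ys : ℝ) (ts : Fin n → ℝ) (zs : Fin m → ℝ) (us : ℝ)
    (hfeas : Feasible2 n m a b M xs ys ts zs us)
    (hopt : ∀ x y t z u, Feasible2 n m a b M x y t z u → us ≤ u)
    (husM : us ≤ M) :
    (∃ x y t z v, Feasible3 n m a b M x y t z us v) ∧
    (∀ x y t z u v, Feasible3 n m a b M x y t z u v → us ≤ u) := by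
  obtain ⟨hz, hu, hsum, ht, hx⟩ := hfeas
  refine ⟨⟨xs, ys, ts, zs, fun j => us * zs j, hz, hu, ?_, ?_, ht, hx, ?_, ?_, ?_⟩, ?_⟩
  · intro j
    rcases hz j with h | h <;> simp [h, hu]
  · rw [hsum, Finset.mul_sum]
  · intro j
    rcases hz j with h | h <;> simp [h, hu]
  · intro j
    rcases hz j with h | h <;> simp [h, husM]
  · intro j
    rcases hz j with h | h <;> simp [h, husM]
  · rintro x y t z u v ⟨hz, hu, hv, hsum, ht, hx, hvu, hlow, hup⟩
    -- `z j = 0` squeezes `v j` between `0` and `M * 0`; `z j = 1` squeezes it between `u` and `u`.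
    have hvz : ∀ j, v j = u * z j := by
      intro j
      have h1 := hv j
      have h2 := hvu j
      have h3 := hlow j
      have h4 := hup j
      rcases hz j with h | h <;> rw [h] at h3 h4 ⊢ <;> linarith
    refine hopt x y t z u ⟨hz, hu, ?_, ht, hx⟩
    rw [hsum, Finset.mul_sum, Finset.sum_congr rfl fun j _ => hvz j]
end

section
/- Every optimal solution of formulation (8), i.e., every feasible solution of formulation (8) whose value of u is minimal among all feasible solutions, satisfies t_i⁺ = 0 or t_i⁻ = 0 for every i ∈ I. -/
/-!
Suppose some `t_i⁺` and `t_i⁻` are both positive. Subtracting `min (t_k⁺) (t_k⁻)` from both entries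
for every `k` keeps the residual equations and nonnegativity, and lowers the total
`T = Σ (t_k⁺ + t_k⁻)` to some `T'` with `0 ≤ T' < T`. Scaling `u` and all `v_j` by
`r = T' / T ∈ [0, 1)` restores the equation `T' = (n-1) u' - Σ v'_j`. The big-M constraints survive:
`r v_j ≤ v_j` and `r (u - v_j) ≤ u - v_j`, because `0 ≤ v_j ≤ u`. Finally `T > 0` forces `u > 0`,
so `r u < u`, contradicting optimality.
-/

open Finset

/-- Feasibility for formulation (8): all variables nonnegative, `z` binary,
`Σ (t_i⁺ + t_i⁻) = (n-1)u − Σ v_j`, residual equations, and the big-M constraints. -/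
def Feasible8 (n m : ℕ) (a : Fin n → Fin m → ℝ) (b : Fin n → ℝ) (M : ℝ)
    (xp xm : Fin m → ℝ) (yp ym : ℝ) (tp tm : Fin n → ℝ) (v : Fin m → ℝ)
    (u : ℝ) (z : Fin m → ℝ) : Prop :=
  (∀ j, z j = 0 ∨ z j = 1) ∧
  (∀ j, 0 ≤ xp j) ∧ (∀ j, 0 ≤ xm j) ∧ (∀ j, 0 ≤ v j) ∧
  (∀ i, 0 ≤ tp i) ∧ (∀ i, 0 ≤ tm i) ∧
  0 ≤ yp ∧ 0 ≤ ym ∧ 0 ≤ u ∧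
  (∑ i, (tp i + tm i)) = ((n : ℝ) - 1) * u - ∑ j, v j ∧
  (∀ i, tp i - tm i = (∑ j, a i j * (xp j - xm j)) + (yp - ym) - b i) ∧
  (∀ j, xp j ≤ M * z j) ∧ (∀ j, xm j ≤ M * z j) ∧
  (∀ j, v j ≤ u) ∧
  (∀ j, u - M * (1 - z j) ≤ v j) ∧ (∀ j, v j ≤ M * z j)

/-- Every optimal solution of formulation (8) satisfies `t_i⁺ = 0` or `t_i⁻ = 0`
for every `i ∈ I`. -/
theorem stmt3 (n m : ℕ) (hn : 1 ≤ n) (a : Fin n → Fin m → ℝ) (b : Fin n → ℝ)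
    (M : ℝ) (hM : 0 < M)
    (xp xm : Fin m → ℝ) (yp ym : ℝ) (tp tm : Fin n → ℝ) (v : Fin m → ℝ)
    (u : ℝ) (z : Fin m → ℝ)
    (hfeas : Feasible8 n m a b M xp xm yp ym tp tm v u z)
    (hopt : ∀ xp' xm' yp' ym' tp' tm' v' u' z',
      Feasible8 n m a b M xp' xm' yp' ym' tp' tm' v' u' z' → u ≤ u') :
    ∀ i, tp i = 0 ∨ tm i = 0 := by
  obtain ⟨hz, hxp, hxm, hv, htp, htm, hyp, hym, hu, hsum, hres, hxpM, hxmM, hvu, hlo, hhi⟩ := hfeas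
  intro i
  by_contra! hcon
  have hpi : 0 < tp i := lt_of_le_of_ne (htp i) hcon.1.symm
  have hmi : 0 < tm i := lt_of_le_of_ne (htm i) hcon.2.symm
  set tp' : Fin n → ℝ := fun k => tp k - min (tp k) (tm k) with htp'
  set tm' : Fin n → ℝ := fun k => tm k - min (tp k) (tm k) with htm'
  have hp0 : ∀ k, 0 ≤ tp' k := fun k => sub_nonneg.2 (min_le_left _ _)
  have hm0 : ∀ k, 0 ≤ tm' k := fun k => sub_nonneg.2 (min_le_right _ _)
  have hmin : ∀ k, 0 ≤ min (tp k) (tm k) := fun k => le_min (htp k) (htm k)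
  set T := ∑ k, (tp k + tm k) with hT
  set T' := ∑ k, (tp' k + tm' k) with hT'
  have hT'0 : 0 ≤ T' := Finset.sum_nonneg fun k _ => add_nonneg (hp0 k) (hm0 k)
  have hlt : T' < T := by
    refine Finset.sum_lt_sum (fun k _ => ?_) ⟨i, Finset.mem_univ i, ?_⟩
    · simp only [htp', htm']
      linarith [hmin k]
    · simp only [htp', htm']
      linarith [lt_min hpi hmi]
  have hTpos : 0 < T := hT'0.trans_lt hlt
  have hupos : 0 < u := by
    refine lt_of_le_of_ne hu fun h => ?_
    have hvs : 0 ≤ ∑ j, v j := Finset.sum_nonneg fun j _ => hv j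
    rw [← h] at hsum
    linarith
  obtain ⟨r, hr⟩ : ∃ r, r = T' / T := ⟨_, rfl⟩
  have hr0 : 0 ≤ r := hr ▸ div_nonneg hT'0 hTpos.le
  have hr1 : r < 1 := hr ▸ (div_lt_one hTpos).2 hlt
  have hrT : T' = r * T := by rw [hr, div_mul_cancel₀ _ hTpos.ne']
  have hle : ∀ w : ℝ, 0 ≤ w → r * w ≤ w := fun w hw => mul_le_of_le_one_left hw hr1.le
  have key : u ≤ r * u := by
    refine hopt xp xm yp ym tp' tm' (fun j => r * v j) (r * u) z
      ⟨hz, hxp, hxm, fun j => mul_nonneg hr0 (hv j), hp0, hm0, hyp, hym, mul_nonneg hr0 hu,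
        ?_, ?_, hxpM, hxmM, fun j => mul_le_mul_of_nonneg_left (hvu j) hr0, ?_,
        fun j => (hle _ (hv j)).trans (hhi j)⟩
    · rw [← Finset.mul_sum, ← hT', hrT, hsum]
      ring
    · intro k
      rw [← hres k]
      simp only [htp', htm']
      ring
    · intro j
      have := hle (u - v j) (sub_nonneg.2 (hvu j))
      linarith [hlo j]
  have : r * u < u := mul_lt_of_lt_one_left hupos hr1
  linarith
end

section
/- Every optimal solution of formulation (9), i.e., every feasible solution of formulation (9) whose value of u is minimal among all feasible solutions, satisfies the quadratic constraint at equality: Σ_{i∈I}(t_i⁺ − t_i⁻)² = (n−1)u − Σ_{j∈J} v_j. -/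
/-!
The big-M constraints force `v j = u * z j` and, as soon as there is an index `j`, `u ≤ M`.
Hence the right-hand side of the quadratic constraint is `c * u` with `c = n - 1 - ∑ j, z j`.
If the constraint were strict, then `0 ≤ S < c * u` for `S = ∑ i, (tp i - tm i) ^ 2`, so `c > 0`;
replacing `u` by `S / c < u` and `v j` by `(S / c) * z j` keeps every constraint
satisfied, contradicting the minimality of `u`.
-/

open Finset

/-- Feasibility for formulation (9): all variables nonnegative, `z` binary, the convex
quadratic constraint `Σ (t_i⁺ − t_i⁻)² ≤ (n-1)u − Σ v_j`, residual equations, and the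
big-M constraints. -/
def Feasible9 (n m : ℕ) (a : Fin n → Fin m → ℝ) (b : Fin n → ℝ) (M : ℝ)
    (xp xm : Fin m → ℝ) (yp ym : ℝ) (tp tm : Fin n → ℝ) (v : Fin m → ℝ)
    (u : ℝ) (z : Fin m → ℝ) : Prop :=
  (∀ j, z j = 0 ∨ z j = 1) ∧
  (∀ j, 0 ≤ xp j) ∧ (∀ j, 0 ≤ xm j) ∧ (∀ j, 0 ≤ v j) ∧
  (∀ i, 0 ≤ tp i) ∧ (∀ i, 0 ≤ tm i) ∧
  0 ≤ yp ∧ 0 ≤ ym ∧ 0 ≤ u ∧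
  (∑ i, (tp i - tm i) ^ 2) ≤ ((n : ℝ) - 1) * u - ∑ j, v j ∧
  (∀ i, tp i - tm i = (∑ j, a i j * (xp j - xm j)) + (yp - ym) - b i) ∧
  (∀ j, xp j ≤ M * z j) ∧ (∀ j, xm j ≤ M * z j) ∧
  (∀ j, v j ≤ u) ∧
  (∀ j, u - M * (1 - z j) ≤ v j) ∧ (∀ j, v j ≤ M * z j)

/-- Every optimal solution of formulation (9) satisfies the quadratic constraint at
equality: `Σ (t_i⁺ − t_i⁻)² = (n-1)u − Σ v_j`. -/
theorem stmt4 (n m : ℕ) (hn : 1 ≤ n) (a : Fin n → Fin m → ℝ) (b : Fin n → ℝ)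
    (M : ℝ) (hM : 0 < M)
    (xp xm : Fin m → ℝ) (yp ym : ℝ) (tp tm : Fin n → ℝ) (v : Fin m → ℝ)
    (u : ℝ) (z : Fin m → ℝ)
    (hfeas : Feasible9 n m a b M xp xm yp ym tp tm v u z)
    (hopt : ∀ xp' xm' yp' ym' tp' tm' v' u' z',
      Feasible9 n m a b M xp' xm' yp' ym' tp' tm' v' u' z' → u ≤ u') :
    (∑ i, (tp i - tm i) ^ 2) = ((n : ℝ) - 1) * u - ∑ j, v j := by
  obtain ⟨hz, hxp, hxm, hv, htp, htm, hyp, hym, hu, hq, hr, h1, h2, h3, h4, h5⟩ := hfeas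
  -- The big-M constraints linearise the product `v j = u * z j`.
  have hvz : ∀ j, v j = u * z j := by
    intro j
    have k1 := hv j
    have k2 := h3 j
    have k3 := h4 j
    have k4 := h5 j
    rcases hz j with h | h <;> rw [h] at k3 k4 ⊢ <;> linarith
  have huM : ∀ _ : Fin m, u ≤ M := by
    intro j
    have k1 := hvz j
    have k2 := h4 j
    have k3 := h5 j
    rcases hz j with h | h <;> rw [h] at k1 k2 k3 <;> linarith
  have hsum : ∑ j, v j = u * ∑ j, z j := by
    rw [Finset.mul_sum]
    exact Finset.sum_congr rfl fun j _ => hvz j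
  by_contra hne
  have hlt := lt_of_le_of_ne hq hne
  set S := ∑ i, (tp i - tm i) ^ 2 with hS
  have hS0 : 0 ≤ S := Finset.sum_nonneg fun i _ => sq_nonneg _
  set c := (n : ℝ) - 1 - ∑ j, z j with hc
  have hrhs : ((n : ℝ) - 1) * u - ∑ j, v j = c * u := by
    rw [hsum, hc]
    ring
  rw [hrhs] at hlt
  have hcpos : 0 < c := pos_of_mul_pos_left (lt_of_le_of_lt hS0 hlt) hu
  -- `S / c` is the value of `u` at which the quadratic constraint becomes tight.
  have hlt' : S / c < u := by
    rw [div_lt_iff₀ hcpos]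
    linarith
  have hw0 : 0 ≤ S / c := div_nonneg hS0 hcpos.le
  refine absurd (hopt xp xm yp ym tp tm (fun j => S / c * z j) (S / c) z
    ⟨hz, hxp, hxm, ?_, htp, htm, hyp, hym, hw0, ?_, hr, h1, h2, ?_, ?_, ?_⟩) (not_le.mpr hlt')
  · intro j
    rcases hz j with h | h <;> simp only [h] <;> linarith
  · have hcS : c * (S / c) = S := mul_div_cancel₀ S hcpos.ne'
    rw [← Finset.mul_sum, ← hS]
    have : ((n : ℝ) - 1) * (S / c) - S / c * ∑ j, z j = c * (S / c) := by
      rw [hc]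
      ring
    rw [this, hcS]
  all_goals
    intro j
    have := huM j
    rcases hz j with h | h <;> simp only [h] <;> linarith
end

section
/- Assume the all-ones vector 𝟙 ∈ ℝ^n together with the columns a_{·1}, …, a_{·m} of the data matrix a form a linearly independent family in ℝ^n. Fix k ∈ J and 0 < ε < 1. Then the linear program (13), which maximizes x_k⁺ − ε·μ over all feasible solutions of system (12) that additionally satisfy x_k⁻ = 0, is bounded: there is a constant C ∈ ℝ such that x_k⁺ − ε·μ ≤ C for every such feasible solution. -/
/-!
Linear independence of the ones vector and the columns of `a` provides a linear functional `φ` on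
`ℝⁿ` dual to column `k`. Applied to the residual equations `t⁺ - t⁻ + b = a (x⁺ - x⁻) + (y⁺ - y⁻) 𝟙`
it yields `x_k⁺ - x_k⁻ = φ (t⁺ - t⁻) + φ b`. Every `|t_i⁺ - t_i⁻|` is at most `T_max`, so the right
side is bounded uniformly; with `x_k⁻ = 0` this bounds `x_k⁺`, and subtracting `ε μ ≥ 0` keeps the
bound.
-/

open Finset

/-- Feasibility for system (12): all variables nonnegative,
`Σ (t_i⁺ + t_i⁻) ≤ T_max`, residual equations, and `x_j⁺ ≤ μ`, `x_j⁻ ≤ μ`. -/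
def Feasible12 (n m : ℕ) (a : Fin n → Fin m → ℝ) (b : Fin n → ℝ) (Tmax : ℝ)
    (xp xm : Fin m → ℝ) (yp ym : ℝ) (tp tm : Fin n → ℝ) (μ : ℝ) : Prop :=
  (∀ j, 0 ≤ xp j) ∧ (∀ j, 0 ≤ xm j) ∧
  (∀ i, 0 ≤ tp i) ∧ (∀ i, 0 ≤ tm i) ∧
  0 ≤ yp ∧ 0 ≤ ym ∧ 0 ≤ μ ∧
  (∑ i, (tp i + tm i)) ≤ Tmax ∧
  (∀ i, tp i - tm i = (∑ j, a i j * (xp j - xm j)) + (yp - ym) - b i) ∧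
  (∀ j, xp j ≤ μ) ∧ (∀ j, xm j ≤ μ)

/-- If the all-ones vector together with the columns of `a` are linearly independent,
then for any `k ∈ J` and `0 < ε < 1` the LP (13), maximizing `x_k⁺ − ε·μ` over feasible
solutions of system (12) with `x_k⁻ = 0`, is bounded above. -/
theorem stmt5 (n m : ℕ) (hn : 1 ≤ n) (a : Fin n → Fin m → ℝ) (b : Fin n → ℝ)
    (Tmax : ℝ) (hT : 0 ≤ Tmax)
    (hli : LinearIndependent ℝ
      (fun o : Option (Fin m) => o.elim (fun _ : Fin n => (1 : ℝ)) (fun j i => a i j)))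
    (k : Fin m) (ε : ℝ) (hε0 : 0 < ε) (hε1 : ε < 1) :
    ∃ C : ℝ, ∀ xp xm yp ym tp tm μ,
      Feasible12 n m a b Tmax xp xm yp ym tp tm μ → xm k = 0 →
      xp k - ε * μ ≤ C := by
  -- Linear independence yields a functional `φ` on `ℝⁿ` that reads off the coefficient of
  -- column `k`: it sends that column to `1` and the other columns and the ones vector to `0`.
  obtain ⟨g, hg⟩ := LinearMap.exists_leftInverse_of_injective _
    (LinearMap.ker_eq_bot.mpr hli)
  let φ : (Fin n → ℝ) →ₗ[ℝ] ℝ := Finsupp.lapply (some k) ∘ₗ g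
  have hφ (o : Option (Fin m)) :
      φ (o.elim (fun _ : Fin n => (1 : ℝ)) (fun j i => a i j)) = if o = some k then 1 else 0 := by
    have h := LinearMap.congr_fun hg (Finsupp.single o 1)
    simp only [LinearMap.comp_apply, Finsupp.linearCombination_single, one_smul,
      LinearMap.id_apply] at h
    simp only [φ, LinearMap.comp_apply, h, Finsupp.lapply_apply, Finsupp.single_apply]
  have hφ1 : φ (fun _ => 1) = 0 := by simpa using hφ none
  have hφa (j : Fin m) : φ (fun i => a i j) = if j = k then 1 else 0 := by
    simpa using hφ (some j)
  -- Applying `φ` to the residual equations gives `x_k⁺ = φ (t⁺ - t⁻) + φ b`.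
  refine ⟨∑ i, Tmax * |φ (Pi.single i 1)| + φ b, ?_⟩
  rintro xp xm yp ym tp tm μ ⟨-, -, htp, htm, -, -, hμ, hsum, hres, -, -⟩ hk
  have hvec : tp - tm + b =
      (∑ j, (xp j - xm j) • (fun i => a i j)) + (yp - ym) • (fun _ : Fin n => (1 : ℝ)) := by
    ext i
    have h := hres i
    simp only [Pi.add_apply, Pi.sub_apply, Finset.sum_apply, Pi.smul_apply, smul_eq_mul, mul_one]
    simp only [mul_comm (a i _)] at h
    linarith
  have hx : φ (tp - tm) + φ b = xp k := by
    rw [← map_add, hvec, map_add, map_sum]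
    simp [hφ1, hφa, hk]
  have ht : φ (tp - tm) ≤ ∑ i, Tmax * |φ (Pi.single i 1)| := by
    rw [LinearMap.pi_apply_eq_sum_univ φ (tp - tm)]
    refine Finset.sum_le_sum fun i _ => ?_
    have hi : tp i + tm i ≤ Tmax :=
      (Finset.single_le_sum (f := fun i => tp i + tm i)
        (fun i _ => add_nonneg (htp i) (htm i)) (Finset.mem_univ i)).trans hsum
    have habs : |tp i - tm i| ≤ Tmax :=
      abs_le.mpr ⟨by linarith [htp i, htm i], by linarith [htp i, htm i]⟩
    have hs : (fun j => if i = j then (1 : ℝ) else 0) = Pi.single i 1 := by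
      ext j; simp [Pi.single_apply, eq_comm]
    rw [hs, smul_eq_mul, Pi.sub_apply]
    calc _ ≤ |(tp i - tm i) * φ (Pi.single i 1)| := le_abs_self _
      _ = |tp i - tm i| * |φ (Pi.single i 1)| := abs_mul _ _
      _ ≤ _ := by gcongr
  nlinarith [mul_nonneg hε0.le hμ]
end

section
/- Assume the all-ones vector 𝟙 ∈ ℝ^n together with the columns a_{·1}, …, a_{·m} of the data matrix a form a linearly independent family in ℝ^n. Then for every T_max ≥ 0 the set of regression models whose sum of absolute errors is at most T_max, namely { (x, y) ∈ ℝ^m × ℝ : Σ_{i∈I} |Σ_{j∈J} a_{ij} x_j + y − b_i| ≤ T_max }, is a bounded subset of ℝ^m × ℝ. In particular there exists a finite constant M̂ such that every regression model (x, y) with sum of absolute errors at most T_max satisfies |x_j| ≤ M̂ for all j ∈ J. -/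
open Finset

/-!
The prediction map `(x, y) ↦ a x + y 𝟙` is linear, and linear independence of `𝟙` and the columns
of `a` says exactly that it is injective. An injective linear map between finite-dimensional normed
spaces is antilipschitz, so preimages of bounded sets are bounded. A model with sum of absolute
errors at most `Tmax` has its predictions in the closed sup-norm ball of radius `Tmax` around `b`,
hence the set of such models is bounded.
-/

/-- The linear map sending a regression model `(x, y)` to its vector of predictions. -/
def predictionMap {n m : ℕ} (a : Fin n → Fin m → ℝ) :
    ((Fin m → ℝ) × ℝ) →ₗ[ℝ] (Fin n → ℝ) where
  toFun p := fun i => (∑ j, a i j * p.1 j) + p.2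
  map_add' p q := by
    ext i
    simp only [Prod.fst_add, Prod.snd_add, Pi.add_apply, mul_add, sum_add_distrib]
    ring
  map_smul' c p := by
    ext i
    simp only [Prod.smul_fst, Prod.smul_snd, Pi.smul_apply, smul_eq_mul, RingHom.id_apply,
      mul_add, mul_sum]
    congr 1
    exact sum_congr rfl fun j _ => by ring

lemma predictionMap_ker {n m : ℕ} (a : Fin n → Fin m → ℝ)
    (hli : LinearIndependent ℝ
      (fun o : Option (Fin m) => o.elim (fun _ : Fin n => (1 : ℝ)) (fun j i => a i j))) :
    LinearMap.ker (predictionMap a) = ⊥ := by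
  rw [LinearMap.ker_eq_bot']
  rintro ⟨x, y⟩ h
  have key := Fintype.linearIndependent_iff.mp hli (fun o => o.elim y x) (by
    ext i
    have hi : (∑ j, a i j * x j) + y = 0 := congrFun h i
    simp only [Fintype.sum_option, Option.elim, Pi.add_apply, Finset.sum_apply, Pi.smul_apply,
      smul_eq_mul, mul_one, Pi.zero_apply]
    rw [← hi, add_comm]
    congr 1
    exact sum_congr rfl fun j _ => mul_comm _ _)
  ext j
  · exact key (some j)
  · exact key none

/-- If the all-ones vector together with the columns of `a` are linearly independent,
then for every `T_max ≥ 0` the set of regression models `(x, y)` whose sum of absolute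
errors is at most `T_max` is bounded; in particular there is a finite constant `M̂`
bounding `|x_j|` for all such models. -/
theorem stmt6 (n m : ℕ) (hn : 1 ≤ n) (a : Fin n → Fin m → ℝ) (b : Fin n → ℝ)
    (hli : LinearIndependent ℝ
      (fun o : Option (Fin m) => o.elim (fun _ : Fin n => (1 : ℝ)) (fun j i => a i j))) :
    ∀ Tmax : ℝ, 0 ≤ Tmax →
      Bornology.IsBounded
        {p : (Fin m → ℝ) × ℝ | (∑ i, |(∑ j, a i j * p.1 j) + p.2 - b i|) ≤ Tmax} ∧
      ∃ Mhat : ℝ, ∀ (x : Fin m → ℝ) (y : ℝ),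
        (∑ i, |(∑ j, a i j * x j) + y - b i|) ≤ Tmax → ∀ j, |x j| ≤ Mhat := by
  intro Tmax hT
  obtain ⟨K, -, hK⟩ := (predictionMap a).exists_antilipschitzWith (predictionMap_ker a hli)
  have hbdd : Bornology.IsBounded
      {p : (Fin m → ℝ) × ℝ | (∑ i, |(∑ j, a i j * p.1 j) + p.2 - b i|) ≤ Tmax} := by
    refine (hK.isBounded_preimage
      (Metric.isBounded_closedBall (x := b) (r := Tmax))).subset fun p hp => ?_
    rw [Set.mem_preimage, Metric.mem_closedBall, dist_pi_le_iff hT]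
    intro i
    -- each single absolute error is at most the sum of all of them
    exact (single_le_sum (f := fun i => |(∑ j, a i j * p.1 j) + p.2 - b i|)
      (fun _ _ => abs_nonneg _) (mem_univ i)).trans hp
  refine ⟨hbdd, ?_⟩
  obtain ⟨C, hC⟩ := hbdd.exists_norm_le
  exact ⟨C, fun x y h j =>
    ((norm_le_pi_norm x j).trans (norm_fst_le (x, y))).trans (hC (x, y) h)⟩
end

section
/- Let A be an m × m matrix with rational entries and B an m-vector with rational entries. If the linear system A x = B has a solution x ∈ ℚ^m, then it has a solution x̂ ∈ ℚ^m satisfying |x̂_j| ≤ 2^{size(A)·size(B) − 1} for every j ∈ {1,…,m}. -/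
/-!
The bound is Cramer's rule applied to a nonsingular matrix `A'`. Choose a maximal linearly independent
set `S` of columns of `A` and complete it with standard basis vectors to a basis of `ℚ^m`; these
vectors are the columns of `A'`, each column of `S` keeping its position. Since `B` is in the column
space of `A`, there is `y` supported on `S` with `A y = B`, and then `A' y = B` as well
(`exists_basic_solution`).

By Cramer, `det A' * y j` is the determinant of `A'` with column `j` replaced by `B`. That
determinant is at most the product of `1 + |entry|` over all entries (`abs_det_le`), while
`|det A'|` is at least the inverse of the product of all denominators, because clearing the
denominators gives a nonzero integer (`one_le_abs_det_mul`). Each factor `(1 + |r|) * r.den` is at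
most `2 ^ qsize r`, and a standard basis column contributes factors at most `2`, which is no more
than the factor allowed for the entry it replaces. Hence `|y j| ≤ 2 ^ (msize A + vsize B)`, and
`a + b ≤ a * b - 1` whenever `3 ≤ a` and `2 ≤ b`.
-/

open Finset

/-- The size of a rational number `r = r_num / r_den` (in lowest terms):
`1 + ⌈log₂(|r_num|+1)⌉ + ⌈log₂(r_den+1)⌉`. -/
def qsize (r : ℚ) : ℕ :=
  1 + Nat.clog 2 (r.num.natAbs + 1) + Nat.clog 2 (r.den + 1)

/-- The size of a rational vector: the sum of the sizes of its entries. -/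
def vsize {m : ℕ} (B : Fin m → ℚ) : ℕ := ∑ i, qsize (B i)

/-- The size of a square rational matrix indexed by a finite type `ι`:
`|ι|² + Σ_i Σ_j size(A_{ij})`. -/
def msize {ι : Type*} [Fintype ι] (A : Matrix ι ι ℚ) : ℕ :=
  Fintype.card ι ^ 2 + ∑ i, ∑ j, qsize (A i j)

/-- The Leibniz expansion is dominated by the same sum over all maps `Fin m → Fin m`, which factors
as the product of the column sums of absolute values. -/
theorem abs_det_le {m : ℕ} (M : Matrix (Fin m) (Fin m) ℚ) :
    |M.det| ≤ ∏ k, ∏ i, (1 + |M i k|) := by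
  have hcol : ∀ k, ∑ i, |M i k| ≤ ∏ i, (1 + |M i k|) := by
    intro k
    have key : ∀ s : Finset (Fin m), 1 + ∑ i ∈ s, |M i k| ≤ ∏ i ∈ s, (1 + |M i k|) := by
      intro s
      induction s using Finset.induction_on with
      | empty => simp
      | insert a s ha ih =>
        rw [Finset.sum_insert ha, Finset.prod_insert ha]
        have h0 : 0 ≤ ∑ i ∈ s, |M i k| := Finset.sum_nonneg fun _ _ => abs_nonneg _
        nlinarith [abs_nonneg (M a k)]
    linarith [key Finset.univ]
  calc |M.det| ≤ ∑ σ : Equiv.Perm (Fin m), ∏ k, |M (σ k) k| := by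
        rw [Matrix.det_apply]
        refine (Finset.abs_sum_le_sum_abs _ _).trans (Finset.sum_le_sum fun σ _ => ?_)
        rw [Units.smul_def, zsmul_eq_mul, abs_mul, ← Finset.abs_prod]
        rcases Int.units_eq_one_or (Equiv.Perm.sign σ) with h | h <;> simp [h]
    _ ≤ ∑ f : Fin m → Fin m, ∏ k, |M (f k) k| := by
        rw [← Finset.sum_image (s := Finset.univ)
          (g := fun σ : Equiv.Perm (Fin m) => (σ : Fin m → Fin m))
          (f := fun f => ∏ k, |M (f k) k|) (fun a _ b _ hab => DFunLike.coe_injective hab)]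
        exact Finset.sum_le_sum_of_subset_of_nonneg (Finset.subset_univ _)
          fun _ _ _ => Finset.prod_nonneg fun _ _ => abs_nonneg _
    _ = ∏ k, ∑ i, |M i k| := by
        rw [Finset.prod_univ_sum, Fintype.piFinset_univ]
    _ ≤ _ := Finset.prod_le_prod (fun _ _ => Finset.sum_nonneg fun _ _ => abs_nonneg _)
        fun k _ => hcol k

/-- Scaling each column by the product of its denominators makes the matrix integral, so a nonzero
determinant becomes a nonzero integer. -/
theorem one_le_abs_det_mul {m : ℕ} (M : Matrix (Fin m) (Fin m) ℚ) (h : M.det ≠ 0) :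
    1 ≤ |M.det| * ∏ k, ∏ i, ((M i k).den : ℚ) := by
  set c : Fin m → ℚ := fun k => ∏ i, ((M i k).den : ℚ) with hc
  let N : Matrix (Fin m) (Fin m) ℤ := Matrix.of fun i k =>
    (∏ i' ∈ Finset.univ.erase i, ((M i' k).den : ℤ)) * (M i k).num
  have hN : N.map (Int.castRingHom ℚ) = Matrix.of fun i k => c k * M i k := by
    ext i k
    simp only [N, hc, Matrix.map_apply, Matrix.of_apply, eq_intCast, Int.cast_mul, Int.cast_prod,
      Int.cast_natCast]
    rw [← Finset.mul_prod_erase Finset.univ _ (Finset.mem_univ i)]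
    have := Rat.mul_den_eq_num (M i k)
    linear_combination (-∏ x ∈ Finset.univ.erase i, ((M x k).den : ℚ)) * this
  have hdet : ((N.det : ℤ) : ℚ) = (∏ k, c k) * M.det := by
    rw [← Matrix.det_mul_row, ← hN, ← RingHom.mapMatrix_apply, ← RingHom.map_det]; rfl
  have hcpos : 0 < ∏ k, c k := Finset.prod_pos fun k _ => Finset.prod_pos fun i _ => by
    exact_mod_cast (M i k).den_pos
  have hne : N.det ≠ 0 := by
    intro h0
    rw [h0] at hdet
    exact mul_ne_zero hcpos.ne' h (by simpa using hdet.symm)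
  have : (1 : ℚ) ≤ |(N.det : ℚ)| := by exact_mod_cast Int.one_le_abs hne
  rwa [hdet, abs_mul, abs_of_pos hcpos, mul_comm] at this

theorem entry_bound (r : ℚ) : (1 + |r|) * r.den ≤ (2 : ℚ) ^ (qsize r - 1) := by
  have e : |r| * r.den = (r.num.natAbs : ℚ) := by
    rw [Nat.cast_natAbs, Int.cast_abs, ← Rat.mul_den_eq_num r, abs_mul, Nat.abs_cast]
  have h1 := Nat.le_pow_clog (b := 2) (by norm_num) (r.num.natAbs + 1)
  have h2 := Nat.le_pow_clog (b := 2) (by norm_num) (r.den + 1)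
  have h3 : r.den + r.num.natAbs ≤ 2 ^ (qsize r - 1) := by
    have : qsize r - 1 = Nat.clog 2 (r.num.natAbs + 1) + Nat.clog 2 (r.den + 1) := by
      unfold qsize; omega
    rw [this, pow_add]
    refine le_trans ?_ (Nat.mul_le_mul h1 h2)
    nlinarith [Nat.zero_le (r.num.natAbs * r.den)]
  rw [add_mul, e, one_mul]
  exact_mod_cast h3

theorem two_le_qsize (r : ℚ) : 2 ≤ qsize r := by
  have : 0 < Nat.clog 2 (r.den + 1) := Nat.clog_pos (by norm_num) (by have := r.den_pos; omega)
  unfold qsize; omega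

/-- A solvable system has a solution `y` that also solves a nonsingular system `A' y = B`, where each
column of `A'` is the column of `A` in the same position or a standard basis vector. -/
theorem exists_basic_solution {m : ℕ} (A : Matrix (Fin m) (Fin m) ℚ) (B : Fin m → ℚ)
    (h : ∃ x : Fin m → ℚ, A.mulVec x = B) :
    ∃ (A' : Matrix (Fin m) (Fin m) ℚ) (y : Fin m → ℚ), A'.det ≠ 0 ∧
      A.mulVec y = B ∧ A'.mulVec y = B ∧
      ∀ k, A'.col k = A.col k ∨ ∃ l, A'.col k = Pi.single l 1 := by
  classical
  obtain ⟨x, hx⟩ := h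
  -- Columns of `A` and standard basis vectors in one family: `b` selects a basis of the column
  -- space, and `J` extends it to a basis of the whole space.
  let v : Fin m ⊕ Fin m → (Fin m → ℚ) := Sum.elim A.col (fun l => Pi.single l 1)
  obtain ⟨b, hbt, -, hspan, hb⟩ := exists_linearIndepOn_extension (K := ℚ) (v := v)
    (linearIndepOn_empty ℚ v) (Set.empty_subset (Set.range Sum.inl))
  obtain ⟨J, -, hbJ, hJspan, hJ⟩ := exists_linearIndepOn_extension hb (Set.subset_univ b)
  have htop : Submodule.span ℚ (v '' J) = ⊤ := by
    rw [eq_top_iff, ← (Pi.basisFun ℚ (Fin m)).span_eq, Submodule.span_le]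
    rintro _ ⟨l, rfl⟩
    exact hJspan ⟨Sum.inr l, trivial, by simp [v]⟩
  have hcard : Fintype.card (Fin m) = J.toFinset.card := by
    rw [Set.toFinset_card]
    have hbas := Module.finrank_eq_card_basis (Module.Basis.mk hJ (le_of_eq (by
      rw [← htop, Set.image_eq_range])))
    simpa using hbas
  let S : Finset (Fin m) := Finset.univ.filter fun j => Sum.inl j ∈ J
  -- Position the selected vectors so that each selected column of `A` keeps its own index.
  obtain ⟨g, hg⟩ := Finset.exists_equiv_extend_of_card_eq (t := J.toFinset) hcard (s := S)
    (f := Sum.inl) (by intro z hz; simp only [S, Finset.mem_image, Finset.mem_filter] at hz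
                       obtain ⟨a, ha, rfl⟩ := hz; simpa using ha.2) (Sum.inl_injective.injOn)
  let A' : Matrix (Fin m) (Fin m) ℚ := Matrix.of fun i k => v (g k) i
  have hcol : ∀ k, A'.col k = v (g k) := fun k => rfl
  have hLI : LinearIndependent ℚ A'.col := by
    have := hJ.linearIndependent.comp (fun k => (⟨g k, Set.mem_toFinset.1 (g k).2⟩ : J))
      (fun a c hac => g.injective (Subtype.ext (by simpa using hac)))
    exact this
  have hBmem : B ∈ Submodule.span ℚ (v '' b) := by
    have h1 : B ∈ Submodule.span ℚ (Set.range A.col) := by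
      rw [← Matrix.range_mulVecLin]
      exact ⟨x, hx⟩
    have h2 : Submodule.span ℚ (Set.range A.col) ≤ Submodule.span ℚ (v '' b) := by
      rw [Submodule.span_le]
      rintro _ ⟨k, rfl⟩
      exact hspan ⟨Sum.inl k, ⟨k, rfl⟩, rfl⟩
    exact h2 h1
  have hBmem2 : B ∈ Submodule.span ℚ (A.col '' (S : Set (Fin m))) := by
    refine Submodule.span_mono ?_ hBmem
    rintro _ ⟨z, hz, rfl⟩
    obtain ⟨k, rfl⟩ := hbt hz
    exact ⟨k, by simpa [S] using hbJ hz, rfl⟩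
  obtain ⟨c, hc⟩ := (Submodule.mem_span_image_finset_iff_exists_fun ℚ).1 hBmem2
  let y : Fin m → ℚ := fun k => if hk : k ∈ S then c ⟨k, hk⟩ else 0
  have hsolve : ∀ M : Matrix (Fin m) (Fin m) ℚ, (∀ k ∈ S, M.col k = A.col k) →
      M.mulVec y = B := by
    intro M hM
    rw [← hc]
    ext i
    simp only [Matrix.mulVec, dotProduct, Finset.sum_apply, Pi.smul_apply, smul_eq_mul]
    rw [← Finset.sum_subset (Finset.subset_univ S) fun k _ hk => by simp [y, hk],
      ← Finset.sum_coe_sort]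
    refine Finset.sum_congr rfl fun k _ => ?_
    have := congrFun (hM k k.2) i
    simp only [Matrix.col_apply] at this ⊢
    simp [y, this, mul_comm]
  refine ⟨A', y, ?_, hsolve A fun _ _ => rfl, hsolve A' fun k hk => ?_, fun k => ?_⟩
  · exact ((Matrix.isUnit_iff_isUnit_det _).1
      (Matrix.linearIndependent_cols_iff_isUnit.1 hLI)).ne_zero
  · rw [hcol, hg k hk]; rfl
  · rcases hgk : (g k : Fin m ⊕ Fin m) with j | l
    · left
      -- `g` already sends `j` to `inl j`, so injectivity forces `k = j`.
      have hj : j ∈ S := by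
        have := (g k).2
        rw [hgk] at this
        simpa [S] using this
      have : k = j := g.injective (Subtype.ext (by rw [hgk, hg j hj]))
      rw [hcol, hgk, this]; rfl
    · right
      exact ⟨l, by rw [hcol, hgk]; rfl⟩

/-- If the rational linear system `A x = B` has a solution, it has one whose entries are
bounded in absolute value by `2^(size(A)·size(B) − 1)`. -/
theorem stmt8 (m : ℕ) (A : Matrix (Fin m) (Fin m) ℚ) (B : Fin m → ℚ)
    (h : ∃ x : Fin m → ℚ, A.mulVec x = B) :
    ∃ x : Fin m → ℚ, A.mulVec x = B ∧
      ∀ j, |x j| ≤ (2 : ℚ) ^ (msize A * vsize B - 1) := by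
  obtain ⟨A', y, hdet, hAy, hA'y, hcols⟩ := exists_basic_solution A B h
  refine ⟨y, hAy, fun j => ?_⟩
  have hcramer : A'.det * y j = (A'.updateCol j B).det := by
    rw [← Matrix.cramer_apply, ← hA'y, Matrix.cramer_eq_adjugate_mulVec, Matrix.mulVec_mulVec,
      Matrix.adjugate_mul, Matrix.smul_mulVec, Matrix.one_mulVec]
    rfl
  have hden : ∀ r : ℚ, (1 : ℚ) ≤ r.den := fun r => by exact_mod_cast r.den_pos
  have hB : ∏ i, (1 + |B i|) ≤ (2 : ℚ) ^ vsize B := by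
    rw [vsize, ← Finset.prod_pow_eq_pow_sum]
    refine Finset.prod_le_prod (fun _ _ => by positivity) fun i _ => ?_
    calc 1 + |B i| ≤ (1 + |B i|) * (B i).den :=
          le_mul_of_one_le_right (by positivity) (hden _)
      _ ≤ 2 ^ (qsize (B i) - 1) := entry_bound _
      _ ≤ 2 ^ qsize (B i) := pow_le_pow_right₀ (by norm_num) (Nat.sub_le _ _)
  have hnum : |(A'.updateCol j B).det| ≤ (∏ i, (1 + |B i|)) * ∏ k, ∏ i, (1 + |A' i k|) := by
    refine (abs_det_le _).trans ?_
    rw [← Finset.mul_prod_erase _ _ (Finset.mem_univ j)]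
    simp only [Matrix.updateCol_self]
    refine mul_le_mul_of_nonneg_left ?_ (Finset.prod_nonneg fun _ _ => by positivity)
    rw [Finset.prod_congr rfl (g := fun k => ∏ i, (1 + |A' i k|)) fun k hk => by
      simp [Matrix.updateCol_ne (Finset.ne_of_mem_erase hk)]]
    rw [← Finset.mul_prod_erase Finset.univ (fun k => ∏ i, (1 + |A' i k|)) (Finset.mem_univ j)]
    refine le_mul_of_one_le_left
      (Finset.prod_nonneg fun _ _ => Finset.prod_nonneg fun _ _ => by positivity) ?_
    calc (1 : ℚ) = ∏ _i : Fin m, 1 := Finset.prod_const_one.symm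
      _ ≤ ∏ i, (1 + |A' i j|) := Finset.prod_le_prod (fun _ _ => zero_le_one)
          fun i _ => le_add_of_nonneg_right (abs_nonneg _)
  have hentry : ∀ i k, (1 + |A' i k|) * ((A' i k).den : ℚ) ≤ 2 ^ qsize (A i k) := by
    intro i k
    rcases hcols k with hk | ⟨l, hk⟩
    · have e : A' i k = A i k := congrFun hk i
      rw [e]
      exact (entry_bound _).trans (pow_le_pow_right₀ (by norm_num) (Nat.sub_le _ _))
    · have e : A' i k = (Pi.single l 1 : Fin m → ℚ) i := congrFun hk i
      have h2 : (2 : ℚ) ≤ 2 ^ qsize (A i k) :=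
        le_self_pow₀ (by norm_num) (by have := two_le_qsize (A i k); omega)
      refine le_trans ?_ h2
      rw [e, Pi.single_apply]
      split_ifs <;> norm_num
  have hA : (∏ k, ∏ i, (1 + |A' i k|)) * ∏ k, ∏ i, ((A' i k).den : ℚ) ≤ 2 ^ msize A := by
    calc _ = ∏ k, ∏ i, (1 + |A' i k|) * ((A' i k).den : ℚ) := by
          simp only [Finset.prod_mul_distrib]
      _ ≤ ∏ k, ∏ i, (2 : ℚ) ^ qsize (A i k) :=
          Finset.prod_le_prod (fun _ _ => Finset.prod_nonneg fun _ _ => by positivity)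
            fun k _ => Finset.prod_le_prod (fun _ _ => by positivity) fun i _ => hentry i k
      _ = 2 ^ ∑ i, ∑ k, qsize (A i k) := by
          rw [Finset.sum_comm]; simp only [Finset.prod_pow_eq_pow_sum]
      _ ≤ 2 ^ msize A := pow_le_pow_right₀ (by norm_num) (Nat.le_add_left _ _)
  have hb2 : 2 ≤ vsize B :=
    (two_le_qsize (B j)).trans
      (Finset.single_le_sum (f := fun i => qsize (B i)) (fun _ _ => Nat.zero_le _)
        (Finset.mem_univ j))
  have ha3 : 3 ≤ msize A := by
    have h1 : qsize (A j j) ≤ ∑ i, ∑ k, qsize (A i k) :=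
      (Finset.single_le_sum (f := fun k => qsize (A j k)) (fun _ _ => Nat.zero_le _)
        (Finset.mem_univ j)).trans
      (Finset.single_le_sum (f := fun i => ∑ k, qsize (A i k)) (fun _ _ => Nat.zero_le _)
        (Finset.mem_univ j))
    have h2 := two_le_qsize (A j j)
    have h3 : 0 < Fintype.card (Fin m) ^ 2 := pow_pos (Fintype.card_pos_iff.2 ⟨j⟩) 2
    unfold msize
    omega
  have hexp : vsize B + msize A ≤ msize A * vsize B - 1 := by
    have : vsize B + msize A + 1 ≤ msize A * vsize B := by nlinarith
    omega
  have hD : (0 : ℚ) ≤ ∏ k, ∏ i, ((A' i k).den : ℚ) :=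
    Finset.prod_nonneg fun _ _ => Finset.prod_nonneg fun _ _ => by positivity
  calc |y j| ≤ |y j| * (|A'.det| * ∏ k, ∏ i, ((A' i k).den : ℚ)) :=
        le_mul_of_one_le_right (abs_nonneg _) (one_le_abs_det_mul A' hdet)
    _ = |(A'.updateCol j B).det| * ∏ k, ∏ i, ((A' i k).den : ℚ) := by
        rw [← hcramer, abs_mul]; ring
    _ ≤ ((∏ i, (1 + |B i|)) * ∏ k, ∏ i, (1 + |A' i k|)) * ∏ k, ∏ i, ((A' i k).den : ℚ) :=
        mul_le_mul_of_nonneg_right hnum hD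
    _ = (∏ i, (1 + |B i|)) * ((∏ k, ∏ i, (1 + |A' i k|)) * ∏ k, ∏ i, ((A' i k).den : ℚ)) :=
        mul_assoc _ _ _
    _ ≤ 2 ^ vsize B * 2 ^ msize A :=
        mul_le_mul hB hA (mul_nonneg (Finset.prod_nonneg fun _ _ =>
          Finset.prod_nonneg fun _ _ => by positivity) hD) (by positivity)
    _ = 2 ^ (vsize B + msize A) := (pow_add _ _ _).symm
    _ ≤ 2 ^ (msize A * vsize B - 1) := pow_le_pow_right₀ (by norm_num) hexp
end
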